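/- arXiv:1205.5134 — 3 statements merged into one kernel-verified Lean document; each statement's English description precedes it below -/
import Mathlib

section
/- Let K be a field and σ a ring automorphism of K with σ² = id and σ ≠ id. Let γ, θ ∈ K with γ ≠ 0, σ(γ) = γ and σ(θ) = θ. Take τ = σ in the construction. Then for all c, d, e, f ∈ K, the 4×4 matrix α_θ(M(c,d), M(e,f)) commutes with every element of A if and only if σ(c) = c, d = 0, e = 0 and σ(f) = f. (Equivalently, the set of elements of A commuting with all of A is exactly α_θ(F, jF), where F = K^⟨σ⟩.) -/
open Matrix

noncomputable section

/-- The left-regular representation `M(c,d) = [[c, γ·σ(d)], [d, σ(c)]]` of the element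
`c + jd` of the quaternion algebra `(K/F, σ, γ)`. -/
def qMat {K : Type} [Field K] (σ : RingAut K) (γ : K) (c d : K) : Matrix (Fin 2) (Fin 2) K :=
  !![c, γ * σ d; d, σ c]

/-- The iterated construction `α_θ(X, Y) = [[X, θ·τ(Y)], [Y, τ(X)]]` for `2 × 2` blocks. -/
def alphaTheta {K : Type} [Field K] (θ : K) (τ : RingAut K)
    (X Y : Matrix (Fin 2) (Fin 2) K) :
    Matrix (Fin 2 ⊕ Fin 2) (Fin 2 ⊕ Fin 2) K :=
  Matrix.fromBlocks X (θ • Y.map ⇑τ) Y (X.map ⇑τ)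

/-- The iterated code `A = {α_θ(M(c,d), M(e,f)) : c, d, e, f ∈ K}` (case `τ = σ`). -/
def iterQuatCode {K : Type} [Field K] (σ τ : RingAut K) (γ θ : K) :
    Set (Matrix (Fin 2 ⊕ Fin 2) (Fin 2 ⊕ Fin 2) K) :=
  {W | ∃ c d e f : K, W = alphaTheta θ τ (qMat σ γ c d) (qMat σ γ e f)}

/-!
Write `j = M(0,1)`. The first block column of the commutation relation with `α_θ(Z, 0)`, `Z ∈ D`,
says that `X` is central in `D` and that `Y * Z = σ(Z) * Y`. Since `j` is invertible and `j * Z =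
σ(Z) * j` on `D`, the second condition means that `Y` lies in `j` times the centre of `D`, which is
`F`; in coordinates, `X ∈ F` and `Y ∈ jF` are read off from `Z = M(k,0)` with `σ(k) ≠ k` and `Z =
j`. Conversely, `X ∈ F` and `Y ∈ jF` are fixed by `σ`, so applying `σ` to these relations yields the
remaining ones needed to commute with every `α_θ(Z, W)`.
-/

section Quaternion

variable {K : Type} [Field K] {σ : RingAut K} {γ : K}

theorem qMat_zero_zero : qMat σ γ 0 0 = 0 := by
  ext i j
  fin_cases i <;> fin_cases j <;> simp [qMat]

theorem qMat_inj {a b c d : K} : qMat σ γ a b = qMat σ γ c d ↔ a = c ∧ b = d := by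
  refine ⟨fun h ↦ ⟨congrFun₂ h 0 0, congrFun₂ h 1 0⟩, ?_⟩
  rintro ⟨rfl, rfl⟩
  rfl

theorem qMat_map (hσγ : σ γ = γ) (c d : K) :
    (qMat σ γ c d).map σ = qMat σ γ (σ c) (σ d) := by
  ext i j
  fin_cases i <;> fin_cases j <;> simp [qMat, hσγ]

theorem qMat_mul (hσ : Function.Involutive σ) (hσγ : σ γ = γ) (a b c d : K) :
    qMat σ γ a b * qMat σ γ c d = qMat σ γ (a * c + γ * σ b * d) (b * c + σ a * d) := by
  ext i j
  fin_cases i <;> fin_cases j <;> simp [qMat, Matrix.mul_apply, hσγ, hσ b, hσ a] <;> ring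

theorem forall_commute_qMat_iff (hσ : Function.Involutive σ) (hσ1 : σ ≠ 1) (hσγ : σ γ = γ)
    {c d : K} :
    (∀ a b, Commute (qMat σ γ c d) (qMat σ γ a b)) ↔ σ c = c ∧ d = 0 := by
  simp only [commute_iff_eq, qMat_mul hσ hσγ, qMat_inj]
  constructor
  · intro h
    have hc : σ c = c := by simpa using (h 0 1).2
    obtain ⟨k, hk⟩ : ∃ k, σ k ≠ k := DFunLike.ne_iff.mp hσ1
    have hd : d * k = d * σ k := by simpa [mul_comm (σ k)] using (h k 0).2
    exact ⟨hc, (mul_eq_mul_left_iff.mp hd).resolve_left hk.symm⟩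
  · rintro ⟨hc, rfl⟩ a b
    simp only [hc, map_zero]
    constructor <;> ring

theorem forall_semiconjBy_qMat_map_iff (hσ : Function.Involutive σ) (hσ1 : σ ≠ 1) (hγ : γ ≠ 0)
    (hσγ : σ γ = γ) {e f : K} :
    (∀ a b, SemiconjBy (qMat σ γ e f) (qMat σ γ a b) ((qMat σ γ a b).map σ)) ↔
      e = 0 ∧ σ f = f := by
  simp only [SemiconjBy, qMat_map hσγ, qMat_mul hσ hσγ, qMat_inj]
  constructor
  · intro h
    obtain ⟨k, hk⟩ : ∃ k, σ k ≠ k := DFunLike.ne_iff.mp hσ1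
    have he : e * k = e * σ k := by simpa [mul_comm (σ k)] using (h k 0).1
    have hf : γ * σ f = γ * f := by simpa using (h 0 1).1
    exact ⟨(mul_eq_mul_left_iff.mp he).resolve_left hk.symm, mul_left_cancel₀ hγ hf⟩
  · rintro ⟨rfl, hf⟩ a b
    simp only [hf, hσ a, hσ b, map_zero]
    constructor <;> ring

end Quaternion

section EntrywiseMap

variable {n R F : Type*} [Fintype n] [NonAssocSemiring R] [FunLike F R R] [RingHomClass F R R]
  {f : F} {A B : Matrix n n R}

theorem commute_map_of_map_eq_self (hA : A.map f = A) (h : Commute A B) : Commute A (B.map f) := by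
  simpa only [commute_iff_eq, Matrix.map_mul, hA] using congrArg (Matrix.map · f) h.eq

theorem semiconjBy_map_of_map_eq_self (hf : Function.Involutive f) (hA : A.map f = A)
    (h : SemiconjBy A B (B.map f)) : SemiconjBy A (B.map f) B := by
  have hmap := congrArg (Matrix.map · f) h.eq
  simpa only [SemiconjBy, Matrix.map_mul, hA, Matrix.map_map, hf.comp_self, Matrix.map_id]
    using hmap

end EntrywiseMap

section IteratedConstruction

variable {K : Type} [Field K] {τ : RingAut K} {θ : K} {X Y Z W : Matrix (Fin 2) (Fin 2) K}

theorem commute_and_semiconjBy_of_commute_alphaTheta_zero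
    (h : Commute (alphaTheta θ τ X Y) (alphaTheta θ τ Z 0)) :
    Commute X Z ∧ SemiconjBy Y Z (Z.map τ) := by
  have hblocks := h.eq
  simp only [alphaTheta, fromBlocks_multiply, fromBlocks_inj] at hblocks
  obtain ⟨hXZ, -, hYZ, -⟩ := hblocks
  exact ⟨by simpa [commute_iff_eq] using hXZ, by simpa [SemiconjBy] using hYZ⟩

theorem commute_alphaTheta_of_map_eq_self (hτ : Function.Involutive τ)
    (hX : X.map τ = X) (hY : Y.map τ = Y) (hXZ : Commute X Z) (hXW : Commute X W)
    (hYZ : SemiconjBy Y Z (Z.map τ)) (hYW : SemiconjBy Y W (W.map τ)) :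
    Commute (alphaTheta θ τ X Y) (alphaTheta θ τ Z W) := by
  have hXZ' : Commute X (Z.map τ) := commute_map_of_map_eq_self hX hXZ
  have hXW' : Commute X (W.map τ) := commute_map_of_map_eq_self hX hXW
  have hYZ' : SemiconjBy Y (Z.map τ) Z := semiconjBy_map_of_map_eq_self hτ hY hYZ
  have hYW' : SemiconjBy Y (W.map τ) W := semiconjBy_map_of_map_eq_self hτ hY hYW
  simp only [commute_iff_eq, alphaTheta, fromBlocks_multiply, fromBlocks_inj, hX, hY,
    smul_mul_assoc, mul_smul_comm, hXZ.eq, hXW.eq, hXZ'.eq, hXW'.eq, hYZ.eq, hYW.eq, hYZ'.eq,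
    hYW'.eq, true_and, and_true]
  exact ⟨add_comm _ _, add_comm _ _⟩

end IteratedConstruction

theorem stmt4_general {K : Type} [Field K] (σ : RingAut K)
    (hσ2 : σ * σ = 1) (hσ : σ ≠ 1)
    (γ θ : K) (hγ : γ ≠ 0) (hσγ : σ γ = γ) (c d e f : K) :
    (∀ W ∈ iterQuatCode σ σ γ θ,
        alphaTheta θ σ (qMat σ γ c d) (qMat σ γ e f) * W =
          W * alphaTheta θ σ (qMat σ γ c d) (qMat σ γ e f)) ↔
      (σ c = c ∧ d = 0 ∧ e = 0 ∧ σ f = f) := by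
  have hinv : Function.Involutive σ := DFunLike.congr_fun hσ2
  constructor
  · intro h
    have hblocks (a b : K) := commute_and_semiconjBy_of_commute_alphaTheta_zero
      (h _ ⟨a, b, 0, 0, by rw [qMat_zero_zero]⟩)
    obtain ⟨hc, hd⟩ := (forall_commute_qMat_iff hinv hσ hσγ).mp fun a b ↦ (hblocks a b).1
    obtain ⟨he, hf⟩ := (forall_semiconjBy_qMat_map_iff hinv hσ hγ hσγ).mp fun a b ↦ (hblocks a b).2
    exact ⟨hc, hd, he, hf⟩
  · rintro ⟨hc, rfl, rfl, hf⟩ _ ⟨a, b, a', b', rfl⟩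
    have hX := (forall_commute_qMat_iff hinv hσ hσγ).mpr ⟨hc, rfl⟩
    have hY := (forall_semiconjBy_qMat_map_iff hinv hσ hγ hσγ).mpr ⟨rfl, hf⟩
    exact commute_alphaTheta_of_map_eq_self hinv (by rw [qMat_map hσγ, hc, map_zero])
      (by rw [qMat_map hσγ, hf, map_zero]) (hX a b) (hX a' b') (hY a b) (hY a' b')

/-- with `τ = σ`, `σ² = id`, `σ ≠ id`, `γ ≠ 0` fixed by `σ` and `θ` fixed
by `σ`, the element `α_θ(M(c,d), M(e,f))` commutes with every element of `A` iff
`σ(c) = c`, `d = 0`, `e = 0` and `σ(f) = f`; i.e. the commutant of `A` in `A` is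
exactly `α_θ(F, jF)` where `F = K^⟨σ⟩`. -/
theorem stmt4 {K : Type} [Field K] (σ : RingAut K)
    (hσ2 : σ * σ = 1) (hσ : σ ≠ 1)
    (γ θ : K) (hγ : γ ≠ 0) (hσγ : σ γ = γ) (hσθ : σ θ = θ) :
    ∀ c d e f : K,
      (∀ W ∈ iterQuatCode σ σ γ θ,
          alphaTheta θ σ (qMat σ γ c d) (qMat σ γ e f) * W =
            W * alphaTheta θ σ (qMat σ γ c d) (qMat σ γ e f)) ↔
        (σ c = c ∧ d = 0 ∧ e = 0 ∧ σ f = f) :=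
  stmt4_general σ hσ2 hσ γ θ hγ hσγ
end
end

section
/- Let F = ℚ(√−7). Then for every z in the quaternion algebra ℍ[F, −1, −1], one has z·σ(z) ≠ −17. (This is the full-diversity condition for the iterated MIDO Silver code with θ = −17: θ is not of the form z·σ(z) for z in the quaternion algebra (−1,−1) over ℚ(√−7).) -/
open Polynomial Quaternion

noncomputable section

/-- The quadratic number field `F = ℚ(√−7)`, realized as `ℚ[X]/(X² + 7)`. -/
def Qsqrtm7 : Type := AdjoinRoot ((X : ℚ[X]) ^ 2 + C 7)

instance : CommRing Qsqrtm7 := inferInstanceAs (CommRing (AdjoinRoot ((X : ℚ[X]) ^ 2 + C 7)))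

/-- The automorphism `σ` of the quaternion algebra `ℍ[F, a, γ]` given by
`σ(x₀ + x₁i + x₂j + x₃k) = x₀ − x₁i + x₂j − x₃k`. -/
def qsigma {F : Type} [CommRing F] (a γ : F) (z : ℍ[F, a, γ]) : ℍ[F, a, γ] :=
  ⟨z.re, -z.imI, z.imJ, -z.imK⟩

/-!
Write `z = u + v j` with `u, v` in the span of `1, i`. Then `z σ(z) = u ū + γ v² + (v + v̄) u j`,
so if `z σ(z)` is scalar then either `v + v̄ = 0`, or `u = 0` and `v²` is scalar, which makes `v`
scalar too. Over `(-1, -1)`, a scalar `θ = z σ(z)` is therefore a sum of three squares or minus a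
square. When the base field lies in `ℚ₂` and `-θ` is a square there, the first case forces `θ = 0`,
because a sum of four squares is anisotropic over `ℚ₂`. By Hensel's lemma `-7` and `17` are squares
in `ℚ₂`, both being `1` modulo `8`; so `ℚ(√-7)` embeds in `ℚ₂`, and it remains to see that `17` is
not a square in `ℚ(√-7)`.
-/

section Sigma

variable {F : Type} [CommRing F] {a γ : F}

lemma mul_qsigma (z : ℍ[F,a,γ]) :
    z * qsigma a γ z =
      ⟨z.re ^ 2 - a * z.imI ^ 2 + γ * z.imJ ^ 2 + a * γ * z.imK ^ 2,
        2 * γ * (z.imJ * z.imK), 2 * (z.re * z.imJ), 2 * (z.imI * z.imJ)⟩ := by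
  ext <;> simp [qsigma] <;> ring

lemma mul_qsigma_eq_coe_iff [IsDomain F] (h2 : (2 : F) ≠ 0) (hγ : γ ≠ 0) {z : ℍ[F,a,γ]} {c : F} :
    z * qsigma a γ z = (c : ℍ[F,a,γ]) ↔
      (z.imJ = 0 ∧ z.re ^ 2 - a * z.imI ^ 2 + a * γ * z.imK ^ 2 = c) ∨
        (z.re = 0 ∧ z.imI = 0 ∧ z.imK = 0 ∧ γ * z.imJ ^ 2 = c) := by
  simp only [mul_qsigma, QuaternionAlgebra.ext_iff, QuaternionAlgebra.re_coe,
    QuaternionAlgebra.imI_coe, QuaternionAlgebra.imJ_coe, QuaternionAlgebra.imK_coe,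
    mul_eq_zero, h2, hγ, false_or]
  by_cases hJ : z.imJ = 0 <;> grind

end Sigma

lemma exists_eq_mul_padicInt_of_ne_zero {p : ℕ} [Fact p.Prime] {ι : Type*} [Finite ι]
    {v : ι → ℚ_[p]} (hv : v ≠ 0) :
    ∃ (c : ℚ_[p]) (u : ι → ℤ_[p]), c ≠ 0 ∧ (∃ i, u i = 1) ∧ ∀ i, v i = c * u i := by
  obtain ⟨k, hk⟩ := Function.ne_iff.mp hv
  have : Nonempty ι := ⟨k⟩
  obtain ⟨m, hm⟩ := Finite.exists_max fun i => ‖v i‖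
  have hvm : v m ≠ 0 := norm_pos_iff.mp ((norm_pos_iff.mpr hk).trans_le (hm k))
  have norm_le_one (i : ι) : ‖v i / v m‖ ≤ 1 := by
    rw [norm_div]
    exact div_le_one_of_le₀ (hm i) (norm_nonneg _)
  refine ⟨v m, fun i => ⟨v i / v m, norm_le_one i⟩, hvm, ⟨m, ?_⟩, fun i => ?_⟩
  · exact Subtype.ext (div_self hvm)
  · exact (mul_div_cancel₀ _ hvm).symm

lemma zmod_eight_one_add_sum_three_sq_ne_zero :
    ∀ x y z : ZMod 8, 1 + (x ^ 2 + y ^ 2 + z ^ 2) ≠ 0 := by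
  decide

lemma padic_two_eq_zero_of_sum_four_sq_eq_zero {v : Fin 4 → ℚ_[2]} (hv : ∑ i, v i ^ 2 = 0) :
    v = 0 := by
  by_contra hv0
  obtain ⟨c, u, hc, ⟨m, hm⟩, hvu⟩ := exists_eq_mul_padicInt_of_ne_zero hv0
  have hu : ∑ i, u i ^ 2 = 0 := by
    have : c ^ 2 * ((∑ i, u i ^ 2 : ℤ_[2]) : ℚ_[2]) = 0 := by
      simpa [hvu, mul_pow, Finset.mul_sum] using hv
    exact Subtype.ext ((mul_eq_zero.mp this).resolve_left (pow_ne_zero 2 hc))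
  have hmod : ∑ i, PadicInt.toZModPow (p := 2) 3 (u i) ^ 2 = 0 := by
    simpa using congrArg (PadicInt.toZModPow (p := 2) 3) hu
  rw [Fin.sum_univ_succAbove _ m, hm, map_one, one_pow, Fin.sum_univ_three] at hmod
  exact zmod_eight_one_add_sum_three_sq_ne_zero _ _ _ hmod

lemma isSquare_padicInt_two_of_eight_dvd_sub_one {x : ℤ_[2]} (hx : 8 ∣ x - 1) : IsSquare x := by
  have norm_eval : ‖1 - x‖ ≤ 2 ^ (-(3 : ℕ) : ℤ) := by
    rw [norm_sub_rev]
    refine (PadicInt.norm_le_pow_iff_mem_span_pow (p := 2) _ 3).mpr ?_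
    rw [Ideal.mem_span_singleton]
    norm_num [hx]
  have norm_deriv : ‖(2 : ℤ_[2])‖ = 2⁻¹ := by simpa using PadicInt.norm_p (p := 2)
  have hensel : ‖1 - x‖ < ‖(2 : ℤ_[2])‖ ^ 2 := by
    rw [norm_deriv]
    exact norm_eval.trans_lt (by norm_num)
  obtain ⟨y, hy, -⟩ := hensels_lemma (p := 2) (F := (X ^ 2 - C x : ℤ_[2][X])) (a := 1)
    (by simpa [one_add_one_eq_two] using hensel)
  exact ⟨y, by simpa [sub_eq_zero, eq_comm, sq] using hy⟩

lemma isSquare_intCast_padic_two_of_modEq_one {n : ℤ} (hn : n ≡ 1 [ZMOD 8]) :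
    IsSquare (n : ℚ_[2]) := by
  have h8 : (8 : ℤ_[2]) ∣ n - 1 := by exact_mod_cast map_dvd (Int.castRingHom ℤ_[2]) hn.symm.dvd
  simpa using (isSquare_padicInt_two_of_eight_dvd_sub_one h8).map PadicInt.Coe.ringHom

lemma isSquare_algebraMap_quadraticAlgebra_iff {R : Type*} [CommRing R] [IsDomain R]
    (h2 : (2 : R) ≠ 0) {d c : R} :
    IsSquare (algebraMap R (QuadraticAlgebra R d 0) c) ↔ IsSquare c ∨ ∃ y, c = d * y ^ 2 := by
  constructor
  · rintro ⟨x, hx⟩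
    have hre : c = x.re * x.re + d * x.im * x.im := by simpa using congrArg QuadraticAlgebra.re hx
    have him : 0 = x.re * x.im + x.im * x.re := by simpa using congrArg QuadraticAlgebra.im hx
    have : x.re = 0 ∨ x.im = 0 := by
      refine mul_eq_zero.mp ((mul_eq_zero_iff_left h2).mp ?_)
      linear_combination -him
    rcases this with h0 | h0
    · exact .inr ⟨x.im, by rw [hre, h0]; ring⟩
    · exact .inl ⟨x.re, by rw [hre, h0]; ring⟩
  · rintro (h | ⟨y, rfl⟩)
    · exact h.map _
    · exact ⟨⟨0, y⟩, by ext <;> simp [sq, mul_assoc]⟩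

namespace Qsqrtm7

/-- The ring homomorphism from `ℚ(√-7)` to a commutative `ℚ`-algebra that sends the adjoined root
of `X² + 7` to `t`. It serves to embed `ℚ(√-7)` in `ℚ₂` and to compare it with
`QuadraticAlgebra ℚ (-7) 0`, where squares are read off from coordinates. -/
def lift {K : Type*} [CommRing K] [Algebra ℚ K] (t : K) (ht : t ^ 2 = -7) : Qsqrtm7 →+* K :=
  AdjoinRoot.lift (algebraMap ℚ K) t (by simp [ht, map_ofNat (algebraMap ℚ K)])

lemma irreducible_X_sq_add_seven : Irreducible ((X : ℚ[X]) ^ 2 + C 7) := by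
  have hdeg : ((X : ℚ[X]) ^ 2 + C 7).natDegree = 2 := natDegree_X_pow_add_C
  rw [irreducible_iff_roots_eq_zero_of_degree_le_three hdeg.ge (by omega),
    Multiset.eq_zero_iff_forall_notMem]
  intro x hx
  have : x ^ 2 + 7 = 0 := by simpa using isRoot_of_mem_roots hx
  nlinarith [sq_nonneg x]

lemma lift_injective {K : Type*} [CommRing K] [Nontrivial K] [Algebra ℚ K] (t : K)
    (ht : t ^ 2 = -7) : Function.Injective (lift t ht) :=
  have : Fact (Irreducible ((X : ℚ[X]) ^ 2 + C 7)) := ⟨irreducible_X_sq_add_seven⟩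
  RingHom.injective (R := AdjoinRoot ((X : ℚ[X]) ^ 2 + C 7)) (lift t ht)

lemma exists_injective_ringHom_padic_two : ∃ φ : Qsqrtm7 →+* ℚ_[2], Function.Injective φ := by
  obtain ⟨t, ht⟩ : IsSquare ((-7 : ℤ) : ℚ_[2]) :=
    isSquare_intCast_padic_two_of_modEq_one (by decide)
  have t_sq : t ^ 2 = -7 := by rw [sq, ← ht]; norm_num
  exact ⟨lift t t_sq, lift_injective t t_sq⟩

lemma not_isSquare_seventeen : ¬ IsSquare (17 : Qsqrtm7) := by
  intro h
  have omega_sq : (QuadraticAlgebra.omega : QuadraticAlgebra ℚ (-7) 0) ^ 2 = -7 := by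
    ext <;> simp [sq, QuadraticAlgebra.re_ofNat, QuadraticAlgebra.im_ofNat]
  have h17 : IsSquare (algebraMap ℚ (QuadraticAlgebra ℚ (-7) 0) 17) := by
    have := h.map (lift QuadraticAlgebra.omega omega_sq)
    rwa [map_ofNat] at this ⊢
  rcases (isSquare_algebraMap_quadraticAlgebra_iff two_ne_zero).mp h17 with h | ⟨y, hy⟩
  · norm_num at h
  · nlinarith [sq_nonneg y]

end Qsqrtm7

theorem stmt13_general {F : Type} [CommRing F] {φ : F →+* ℚ_[2]} (hφ : Function.Injective φ)
    {θ : F} (hθ : IsSquare (φ (-θ))) :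
    (∃ z : ℍ[F, -1, -1], z * qsigma (-1) (-1) z = (θ : ℍ[F, -1, -1])) ↔ IsSquare (-θ) := by
  have : IsDomain F := hφ.isDomain φ
  have h2 : (2 : F) ≠ 0 := fun h =>
    two_ne_zero (α := ℚ_[2]) (by rw [← map_ofNat φ 2, h, map_zero])
  simp only [mul_qsigma_eq_coe_iff h2 (neg_ne_zero.mpr one_ne_zero)]
  constructor
  · rintro ⟨z, ⟨-, hz⟩ | ⟨-, -, -, hz⟩⟩
    · obtain ⟨s, hs⟩ := hθ
      have sum_three_sq : φ z.re ^ 2 + φ z.imI ^ 2 + φ z.imK ^ 2 = φ θ := by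
        simpa using congrArg φ hz
      have sum_four_sq : φ z.re ^ 2 + φ z.imI ^ 2 + φ z.imK ^ 2 + s ^ 2 = 0 := by
        rw [sum_three_sq, sq, ← hs, map_neg, add_neg_cancel]
      have hv : ![φ z.re, φ z.imI, φ z.imK, s] = 0 :=
        padic_two_eq_zero_of_sum_four_sq_eq_zero (by simpa [Fin.sum_univ_four] using sum_four_sq)
      have hs0 : s = 0 := congrFun hv 3
      have hθ0 : -θ = 0 := hφ (by simp [hs, hs0])
      exact hθ0 ▸ IsSquare.zero
    · exact ⟨z.imJ, by linear_combination hz⟩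
  · rintro ⟨x, hx⟩
    exact ⟨⟨0, 0, x, 0⟩, .inr ⟨rfl, rfl, rfl, by linear_combination hx⟩⟩

/-- for every `z` in the quaternion algebra `(−1, −1)` over `F = ℚ(√−7)`,
one has `z·σ(z) ≠ −17` (the full-diversity condition for the iterated MIDO Silver code
with `θ = −17`). -/
theorem stmt13 :
    ∀ z : ℍ[Qsqrtm7, -1, -1],
      z * qsigma (-1) (-1) z ≠ ((-17 : Qsqrtm7) : ℍ[Qsqrtm7, -1, -1]) := by
  intro z hz
  obtain ⟨φ, hφ⟩ := Qsqrtm7.exists_injective_ringHom_padic_two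
  have h17 : IsSquare (φ (-(-17))) := by
    simpa [map_ofNat φ] using isSquare_intCast_padic_two_of_modEq_one (n := 17) rfl
  exact Qsqrtm7.not_isSquare_seventeen (neg_neg (17 : Qsqrtm7) ▸ (stmt13_general hφ h17).mp ⟨z, hz⟩)
end
end

section
/- Let F = ℚ(i) (a field obtained by adjoining to ℚ an element ι with ι² = −1). Then for every z in the quaternion algebra ℍ[F, 5, ι], one has z·σ(z) ≠ 1 − ι. (This is the full-diversity condition for the iterated Golden code with θ = 1 − i: θ is not of the form z·σ(z) for z in the quaternion algebra (5, i) over ℚ(i).) -/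
open Polynomial Quaternion

noncomputable section

/-- The quadratic number field `F = ℚ(i)`, realized as `ℚ[X]/(X² + 1)`. -/
def QI : Type := AdjoinRoot ((X : ℚ[X]) ^ 2 + C 1)

instance : CommRing QI := inferInstanceAs (CommRing (AdjoinRoot ((X : ℚ[X]) ^ 2 + C 1)))

/-- The element `ι = i ∈ ℚ(i)`, a square root of `−1`. -/
def iota : QI := AdjoinRoot.root ((X : ℚ[X]) ^ 2 + C 1)

/-!
In the basis `1, i, j, k`, the equation `z * σ(z) = θ` says
`x₀² - a x₁² + γ x₂² + aγ x₃² = θ` and `x₂ x₃ = x₀ x₂ = x₁ x₂ = 0`. So either `x₂ = 0` and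
`x₀² - θ = a (x₁² - γ x₃²)`, or `θ = γ x₂²`.

The first case is excluded by a `p`-adic place at which `a` has odd valuation and `γ`, `θ` are
nonsquare units: the nonzero values of `x² - θ y²` and `x² - γ y²` have even valuation there, so
the two sides cannot agree. For `a = 5`, `γ = ι`, `θ = 1 - ι` the embedding `ℚ(i) → ℚ₅` with
`ι ≡ 3 (mod 5)` qualifies, since `γ ≡ θ ≡ 3`. The second case would make
`ι (1 - ι) = (ι x₂)²` a square, which the other embedding, `ι ≡ 2`, excludes, since there
`ι (1 - ι) ≡ 3`.
-/

section Padic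

variable {p : ℕ} [Fact p.Prime]

open PadicInt (toZMod)

lemma padicInt_norm_eq_one_iff_toZMod_ne_zero {x : ℤ_[p]} : ‖x‖ = 1 ↔ toZMod x ≠ 0 := by
  rw [← PadicInt.isUnit_iff, ← IsLocalRing.notMem_maximalIdeal, ← PadicInt.ker_toZMod,
    RingHom.mem_ker]

instance : HenselianLocalRing ℤ_[p] where
  is_henselian f hf a₀ h₀ h₁ := HenselianRing.is_henselian f hf a₀ h₀ (h₁.map _)

lemma exists_padicInt_sq_eq {u : ℤ_[p]} {r : ZMod p} (hr : r ^ 2 = toZMod u) (h : 2 * r ≠ 0) :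
    ∃ x : ℤ_[p], x ^ 2 = u ∧ toZMod x = r := by
  have henselian : HenselianLocalRing ℤ_[p] := inferInstance
  have lift_root := ((HenselianLocalRing.TFAE ℤ_[p]).out 0 2).1 henselian
  obtain ⟨x, hx, hxr⟩ := lift_root toZMod (ZMod.ringHom_surjective _) (X ^ 2 - C u)
    (monic_X_pow_sub_C u two_ne_zero) r (by simp [hr])
    (by simpa [one_add_one_eq_two, map_ofNat toZMod] using h)
  exact ⟨x, by simpa [sub_eq_zero] using hx, hxr⟩

lemma padicInt_norm_sq_sub_mul_sq_eq_one {u : ℤ_[p]} (hu : ¬IsSquare (toZMod u)) {x y : ℤ_[p]}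
    (h : ‖x‖ = 1 ∨ ‖y‖ = 1) : ‖x ^ 2 - u * y ^ 2‖ = 1 := by
  simp only [padicInt_norm_eq_one_iff_toZMod_ne_zero, map_sub, map_mul, map_pow] at h ⊢
  intro h0
  by_cases hy : toZMod y = 0
  · exact h.elim (fun hx ↦ hx (by simpa [hy] using h0)) (fun hy' ↦ hy' hy)
  · exact hu ⟨toZMod x / toZMod y, by field_simp; linear_combination -h0⟩

lemma padic_norm_sq_sub_mul_sq {u : ℤ_[p]} (hu : ¬IsSquare (toZMod u)) (x y : ℚ_[p]) :
    ‖x ^ 2 - u * y ^ 2‖ = max ‖x‖ ‖y‖ ^ 2 := by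
  obtain ⟨c, hc, hcxy⟩ : ∃ c : ℚ_[p], max ‖x‖ ‖y‖ = ‖c‖ ∧ (c = x ∨ c = y) :=
    (max_choice ‖x‖ ‖y‖).elim (⟨x, ·, .inl rfl⟩) (⟨y, ·, .inr rfl⟩)
  have hx : ‖x‖ ≤ ‖c‖ := hc ▸ le_max_left _ _
  have hy : ‖y‖ ≤ ‖c‖ := hc ▸ le_max_right _ _
  rcases eq_or_ne c 0 with rfl | hc0
  · simp_all
  let x' : ℤ_[p] := ⟨x / c, by rw [norm_div]; exact div_le_one_of_le₀ hx (norm_nonneg c)⟩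
  let y' : ℤ_[p] := ⟨y / c, by rw [norm_div]; exact div_le_one_of_le₀ hy (norm_nonneg c)⟩
  have hunit : ‖x'‖ = 1 ∨ ‖y'‖ = 1 := by
    rcases hcxy with rfl | rfl
    · exact .inl (by simp [x', hc0])
    · exact .inr (by simp [y', hc0])
  have hform : x ^ 2 - u * y ^ 2 = c ^ 2 * ((x' ^ 2 - u * y' ^ 2 : ℤ_[p]) : ℚ_[p]) := by
    push_cast
    simp only [x', y']
    field_simp
  rw [hform, norm_mul, ← PadicInt.norm_def, padicInt_norm_sq_sub_mul_sq_eq_one hu hunit, mul_one,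
    norm_pow, hc]

lemma not_isSquare_padic_coe {u : ℤ_[p]} (hu : ¬IsSquare (toZMod u)) :
    ¬IsSquare (u : ℚ_[p]) := by
  rintro ⟨x, hx⟩
  have hnorm : ‖x ^ 2 - u * 1 ^ 2‖ = max ‖x‖ ‖(1 : ℚ_[p])‖ ^ 2 := padic_norm_sq_sub_mul_sq hu x 1
  have hzero : x ^ 2 - u * 1 ^ 2 = 0 := by linear_combination -hx
  rw [hzero, norm_zero, norm_one] at hnorm
  have hpos : 0 < max ‖x‖ 1 ^ 2 := by positivity
  exact hpos.ne hnorm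

lemma padic_eq_zero_of_norm_sq_eq {a : ℚ_[p]} (ha : Odd a.valuation) {x y : ℚ_[p]}
    (h : ‖x‖ ^ 2 = ‖a‖ * ‖y‖ ^ 2) : x = 0 ∧ y = 0 := by
  have ha0 : a ≠ 0 := by rintro rfl; simp at ha
  have hxy : x = 0 ↔ y = 0 := by
    rw [← norm_eq_zero, ← norm_eq_zero (a := y), ← sq_eq_zero_iff, h]
    simp [ha0]
  by_contra! hne
  have hx : x ≠ 0 := fun hx ↦ hne hx (hxy.1 hx)
  have hy : y ≠ 0 := mt hxy.2 hx
  rw [← norm_pow, ← norm_pow, ← norm_mul,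
    Padic.norm_eq_zpow_neg_valuation (pow_ne_zero 2 hx),
    Padic.norm_eq_zpow_neg_valuation (mul_ne_zero ha0 (pow_ne_zero 2 hy)),
    Padic.valuation_mul ha0 (pow_ne_zero 2 hy), Padic.valuation_pow, Padic.valuation_pow] at h
  have hp : (1 : ℝ) < p := mod_cast (Fact.out : p.Prime).one_lt
  have hval := zpow_right_injective₀ (zero_lt_one.trans hp) hp.ne' h
  obtain ⟨k, hk⟩ := ha
  lia

lemma padic_eq_zero_of_sq_sub_mul_sq_eq {a : ℚ_[p]} (ha : Odd a.valuation) {u w : ℤ_[p]}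
    (hu : ¬IsSquare (toZMod u)) (hw : ¬IsSquare (toZMod w)) {x y s t : ℚ_[p]}
    (h : x ^ 2 - u * y ^ 2 = a * (s ^ 2 - w * t ^ 2)) : x = 0 ∧ y = 0 ∧ s = 0 ∧ t = 0 := by
  have exists_norm_eq_max (b c : ℚ_[p]) : ∃ d : ℚ_[p], max ‖b‖ ‖c‖ = ‖d‖ :=
    (max_choice ‖b‖ ‖c‖).elim (⟨b, ·⟩) (⟨c, ·⟩)
  have eq_zero_of_max {b c : ℚ_[p]} (hbc : max ‖b‖ ‖c‖ = 0) : b = 0 ∧ c = 0 :=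
    ⟨norm_le_zero_iff.1 (hbc ▸ le_max_left _ _), norm_le_zero_iff.1 (hbc ▸ le_max_right _ _)⟩
  obtain ⟨d, hd⟩ := exists_norm_eq_max x y
  obtain ⟨e, he⟩ := exists_norm_eq_max s t
  have hnorm : ‖d‖ ^ 2 = ‖a‖ * ‖e‖ ^ 2 := by
    rw [← hd, ← he, ← padic_norm_sq_sub_mul_sq hu, ← padic_norm_sq_sub_mul_sq hw, h, norm_mul]
  obtain ⟨rfl, rfl⟩ := padic_eq_zero_of_norm_sq_eq ha hnorm
  rw [norm_zero] at hd he
  exact ⟨(eq_zero_of_max hd).1, (eq_zero_of_max hd).2, eq_zero_of_max he⟩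

end Padic

section Quaternion

variable {F : Type} [CommRing F] [NoZeroDivisors F] {a γ θ : F}

lemma sq_sub_eq_or_mul_imJ_sq_eq (h2 : (2 : F) ≠ 0) (hγ : γ ≠ 0) {z : ℍ[F,a,γ]}
    (hz : z * qsigma a γ z = (θ : ℍ[F,a,γ])) :
    z.re ^ 2 - θ = a * (z.imI ^ 2 - γ * z.imK ^ 2) ∨ γ * z.imJ ^ 2 = θ := by
  obtain ⟨x₀, x₁, x₂, x₃⟩ := z
  simp only [qsigma, QuaternionAlgebra.ext_iff, QuaternionAlgebra.re_mul,
    QuaternionAlgebra.imI_mul, QuaternionAlgebra.imJ_mul, QuaternionAlgebra.imK_mul,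
    QuaternionAlgebra.re_coe, QuaternionAlgebra.imI_coe, QuaternionAlgebra.imJ_coe,
    QuaternionAlgebra.imK_coe] at hz ⊢
  obtain ⟨hre, hI, hJ, hK⟩ := hz
  rcases eq_or_ne x₂ 0 with rfl | hx₂
  · left
    linear_combination hre
  · right
    have eq_zero {x : F} (h : 2 * (x₂ * x) = 0) : x = 0 := by simpa [h2, hx₂] using h
    have h₀ : x₀ = 0 := eq_zero (by linear_combination hJ)
    have h₁ : x₁ = 0 := eq_zero (by linear_combination hK)
    have h₃ : x₃ = 0 := by
      have : γ * (2 * (x₂ * x₃)) = 0 := by linear_combination hI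
      exact eq_zero ((mul_eq_zero.1 this).resolve_left hγ)
    subst h₀ h₁ h₃
    linear_combination hre

theorem mul_qsigma_ne_coe {p : ℕ} [Fact p.Prime] (f : F →+* ℚ_[p]) {u w : ℤ_[p]}
    (ha : Odd (f a).valuation) (hγ : f γ = w) (hθ : f θ = u)
    (hw : ¬IsSquare (PadicInt.toZMod w)) (hu : ¬IsSquare (PadicInt.toZMod u))
    (hγθ : ∀ x, γ * x ^ 2 ≠ θ) (z : ℍ[F,a,γ]) :
    z * qsigma a γ z ≠ (θ : ℍ[F,a,γ]) := by
  intro hz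
  have : CharZero F := f.charZero
  have hγ0 : γ ≠ 0 := by
    rintro rfl
    exact not_isSquare_padic_coe hw (by simp [← hγ])
  refine (sq_sub_eq_or_mul_imJ_sq_eq two_ne_zero hγ0 hz).elim (fun h ↦ ?_) (hγθ z.imJ)
  have hform : f z.re ^ 2 - u * 1 ^ 2 = f a * (f z.imI ^ 2 - w * f z.imK ^ 2) := by
    simpa [hγ, hθ] using congrArg f h
  exact one_ne_zero (padic_eq_zero_of_sq_sub_mul_sq_eq ha hu hw hform).2.1

end Quaternion

instance fact_prime_five : Fact (Nat.Prime 5) := ⟨Nat.prime_five⟩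

namespace QI

lemma irreducible_X_sq_add_one : Irreducible ((X : ℚ[X]) ^ 2 + C 1) := by
  have hdeg : ((X : ℚ[X]) ^ 2 + C 1).natDegree = 2 := natDegree_X_pow_add_C
  refine irreducible_of_degree_le_three_of_not_isRoot (by rw [hdeg]; decide) fun x hx ↦ ?_
  have hx' : x ^ 2 + 1 = 0 := by simpa using hx
  exact (by positivity : x ^ 2 + 1 ≠ 0) hx'

instance : IsDomain QI :=
  have : Fact (Irreducible ((X : ℚ[X]) ^ 2 + C 1)) := ⟨irreducible_X_sq_add_one⟩
  inferInstanceAs (IsDomain (AdjoinRoot ((X : ℚ[X]) ^ 2 + C 1)))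

lemma exists_ringHom_padic {p : ℕ} [Fact p.Prime] {r : ZMod p} (hr : r ^ 2 = -1)
    (h2 : (2 : ZMod p) ≠ 0) :
    ∃ (f : QI →+* ℚ_[p]) (I : ℤ_[p]), f iota = I ∧ PadicInt.toZMod I = r := by
  have hr0 : r ≠ 0 := by
    rintro rfl
    simp at hr
  obtain ⟨I, hI, hIr⟩ := exists_padicInt_sq_eq (u := -1) (by simpa using hr) (mul_ne_zero h2 hr0)
  have hroot : eval₂ (algebraMap ℚ ℚ_[p]) (I : ℚ_[p]) (X ^ 2 + C 1) = 0 := by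
    have hI' : (I : ℚ_[p]) ^ 2 = -1 := mod_cast congrArg ((↑) : ℤ_[p] → ℚ_[p]) hI
    simp [hI']
  exact ⟨AdjoinRoot.lift _ _ hroot, I, AdjoinRoot.lift_root hroot, hIr⟩

lemma iota_mul_sq_ne_one_sub_iota (x : QI) : iota * x ^ 2 ≠ 1 - iota := by
  intro h
  obtain ⟨f, I, hfι, hI⟩ := exists_ringHom_padic (r := (2 : ZMod 5)) (by decide) (by decide)
  have hI2 : ¬IsSquare (PadicInt.toZMod (I * (1 - I))) := by
    rw [map_mul, map_sub, map_one, hI]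
    decide
  have hfx : (I : ℚ_[5]) * f x ^ 2 = 1 - I := by simpa [hfι] using congrArg f h
  refine not_isSquare_padic_coe hI2 ⟨I * f x, ?_⟩
  push_cast
  linear_combination -(I : ℚ_[5]) * hfx

end QI

/-- for every `z` in the quaternion algebra `(5, i)` over `F = ℚ(i)`,
one has `z·σ(z) ≠ 1 − i` (the full-diversity condition for the iterated Golden code
with `θ = 1 − i`). -/
theorem stmt14 :
    ∀ z : ℍ[QI, 5, iota],
      z * qsigma 5 iota z ≠ ((1 - iota : QI) : ℍ[QI, 5, iota]) := by
  obtain ⟨f, I, hfι, hI⟩ := QI.exists_ringHom_padic (r := (3 : ZMod 5)) (by decide) (by decide)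
  have h5 : Odd (f 5).valuation := by
    rw [map_ofNat]
    simp
  have hθ : f (1 - iota) = (1 - I : ℤ_[5]) := by simp [hfι]
  have hι_nonsq : ¬IsSquare (PadicInt.toZMod I) := by
    rw [hI]
    decide
  have hθ_nonsq : ¬IsSquare (PadicInt.toZMod (1 - I)) := by
    rw [map_sub, map_one, hI]
    decide
  exact mul_qsigma_ne_coe f h5 hfι hθ hι_nonsq hθ_nonsq QI.iota_mul_sq_ne_one_sub_iota
end
end
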